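/- Let D be a nonempty set of pairs (r,c) of real numbers, and let c_min, c_max, r_max be real constants with 0 < c_min such that for every (r,c) ∈ D we have c_min ≤ c ≤ c_max and r ≤ r_max. Define θ* := sup_{(r,c)∈D} r/c. If a real number θ satisfies sup_{(r,c)∈D} (r − θ·c) = 0, then θ = θ*. -/

import Mathlib

/-!
For positive costs, `θ` bounds every ratio `r / c` exactly when `0` bounds every value `r - θ * c`.
If all costs are at least `m > 0`, raising `θ` by `δ` lowers every bound on these values by at least
`δ * m`. So were some `w < θ` to bound the ratios, the values at `θ` would stay below
`-(θ - w) * m < 0` and their supremum could not be `0`.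
-/

section Dinkelbach

variable {ι K : Type*} {s : Set ι} {r c : ι → K}

theorem mem_upperBounds_div_iff_sub_mul [Field K] [LinearOrder K] [IsStrictOrderedRing K]
    {θ : K} (hc : ∀ i ∈ s, 0 < c i) :
    θ ∈ upperBounds ((fun i => r i / c i) '' s) ↔
      0 ∈ upperBounds ((fun i => r i - θ * c i) '' s) := by
  simp only [mem_upperBounds, Set.forall_mem_image]
  exact forall₂_congr fun i hi => (div_le_iff₀ (hc i hi)).trans sub_nonpos.symm

theorem sub_mul_mem_upperBounds_sub_mul [CommRing K] [PartialOrder K] [IsOrderedRing K]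
    {b m w θ : K} (hm : ∀ i ∈ s, m ≤ c i) (hwθ : w ≤ θ)
    (hb : b ∈ upperBounds ((fun i => r i - w * c i) '' s)) :
    b - (θ - w) * m ∈ upperBounds ((fun i => r i - θ * c i) '' s) := by
  rintro _ ⟨i, hi, rfl⟩
  calc r i - θ * c i = (r i - w * c i) - (θ - w) * c i := by ring
    _ ≤ b - (θ - w) * m :=
      sub_le_sub (hb (Set.mem_image_of_mem _ hi))
        (mul_le_mul_of_nonneg_left (hm i hi) (sub_nonneg.2 hwθ))

theorem bddAbove_image_sub_mul [CommRing K] [LinearOrder K] [IsOrderedRing K]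
    {R C : K} (θ : K) (hr : ∀ i ∈ s, r i ≤ R) (hc : ∀ i ∈ s, |c i| ≤ C) :
    BddAbove ((fun i => r i - θ * c i) '' s) := by
  refine ⟨R + |θ| * C, Set.forall_mem_image.2 fun i hi => ?_⟩
  calc r i - θ * c i ≤ r i + |θ * c i| := by
        rw [sub_eq_add_neg]
        gcongr
        exact neg_le_abs _
    _ = r i + |θ| * |c i| := by rw [abs_mul]
    _ ≤ R + |θ| * C := by
        gcongr
        exacts [hr i hi, hc i hi]

theorem stmt_1_general [Field K] [LinearOrder K] [IsStrictOrderedRing K]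
    {m θ : K} (hm : 0 < m) (hc : ∀ i ∈ s, m ≤ c i)
    (hθ : IsLUB ((fun i => r i - θ * c i) '' s) 0) :
    IsLUB ((fun i => r i / c i) '' s) θ := by
  have hpos : ∀ i ∈ s, 0 < c i := fun i hi => hm.trans_le (hc i hi)
  refine ⟨(mem_upperBounds_div_iff_sub_mul hpos).2 hθ.1, fun w hw => ?_⟩
  by_contra! hwθ
  have hgap : 0 ≤ 0 - (θ - w) * m :=
    hθ.2 (sub_mul_mem_upperBounds_sub_mul hc hwθ.le ((mem_upperBounds_div_iff_sub_mul hpos).1 hw))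
  linarith [mul_pos (sub_pos.2 hwθ) hm]

end Dinkelbach

/-- Uniqueness of the Dinkelbach fixed point: if
`sup_{(r,c) ∈ D} (r − θ·c) = 0`, then `θ` equals the optimal ratio
`θ* = sup_{(r,c) ∈ D} r/c`. -/
theorem stmt_1 (D : Set (ℝ × ℝ)) (hD : D.Nonempty)
    (cmin cmax rmax : ℝ) (hcmin : 0 < cmin)
    (hbounds : ∀ p ∈ D, cmin ≤ p.2 ∧ p.2 ≤ cmax ∧ p.1 ≤ rmax)
    (θ : ℝ)
    (hθ : sSup ((fun p : ℝ × ℝ => p.1 - θ * p.2) '' D) = 0) :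
    θ = sSup ((fun q : ℝ × ℝ => q.1 / q.2) '' D) := by
  have hcost : ∀ p ∈ D, |p.2| ≤ cmax := fun p hp =>
    (abs_of_pos (hcmin.trans_le (hbounds p hp).1)).trans_le (hbounds p hp).2.1
  have hbdd := bddAbove_image_sub_mul θ (fun p hp => (hbounds p hp).2.2) hcost
  have hlub : IsLUB ((fun p : ℝ × ℝ => p.1 - θ * p.2) '' D) 0 :=
    hθ ▸ isLUB_csSup (hD.image _) hbdd
  have hratio := stmt_1_general hcmin (fun p hp => (hbounds p hp).1) hlub
  exact (hratio.csSup_eq (hD.image _)).symm
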